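/- arXiv:1604.01302 — 3 statements merged into one kernel-verified Lean document; each statement's English description precedes it below -/
import Mathlib

section
/- Let f ∈ L¹(T^n) ∩ L²(T^n) have nonnegative Fourier coefficients and let g be a continuous function on T^n with nonnegative Fourier coefficients. Then ∫_{T^n} |f|² g dx ≥ ĝ₀ ∫_{T^n} |f|² dx. -/
open MeasureTheory Complex Set
open scoped ENNReal NNReal ComplexOrder

noncomputable def eC (t : ℝ) : ℂ := Complex.exp (2 * Real.pi * Complex.I * t)

noncomputable def box (n : ℕ) : Set (Fin n → ℝ) :=
  Set.Icc (fun _ => -(1/2 : ℝ)) (fun _ => (1/2 : ℝ))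

def IsPeriodic {n : ℕ} (f : (Fin n → ℝ) → ℂ) : Prop :=
  ∀ (x : Fin n → ℝ) (ν : Fin n → ℤ), f (x + fun i => (ν i : ℝ)) = f x

/-- The ν-th Fourier coefficient of a 1-periodic function on ℝⁿ (the n-torus),
computed over the fundamental domain `[-1/2,1/2]ⁿ`. -/
noncomputable def fourierCoeffT {n : ℕ} (f : (Fin n → ℝ) → ℂ) (ν : Fin n → ℤ) : ℂ :=
  ∫ x in box n, f x * eC (-(∑ i, (ν i : ℝ) * x i))

/-- The Fourier transform on ℝⁿ. -/
noncomputable def fourierR {n : ℕ} (f : (Fin n → ℝ) → ℂ) (ξ : Fin n → ℝ) : ℂ :=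
  ∫ x, f x * eC (-(∑ i, ξ i * x i))

open scoped ComplexConjugate

section Aux

noncomputable local instance instMSCircle : MeasureSpace UnitAddCircle := ⟨AddCircle.haarAddCircle⟩

local instance instHaarCircle : Measure.IsAddHaarMeasure (volume : Measure UnitAddCircle) :=
  inferInstanceAs (Measure.IsAddHaarMeasure AddCircle.haarAddCircle)

local instance instProbCircle : IsProbabilityMeasure (volume : Measure UnitAddCircle) :=
  inferInstanceAs (IsProbabilityMeasure AddCircle.haarAddCircle)

theorem norm_eC (t : ℝ) : ‖eC t‖ = 1 := by
  unfold eC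
  rw [show (2 * Real.pi * Complex.I * t : ℂ) = ((2 * Real.pi * t : ℝ) : ℂ) * Complex.I by
    push_cast; ring]
  exact Complex.norm_exp_ofReal_mul_I _

theorem conj_eC (t : ℝ) : conj (eC t) = eC (-t) := by
  unfold eC
  rw [← Complex.exp_conj]
  have h2 : conj (2 : ℂ) = 2 := Complex.conj_ofNat 2
  simp [h2]

theorem eC_add (s t : ℝ) : eC (s + t) = eC s * eC t := by
  unfold eC
  rw [← Complex.exp_add]
  push_cast
  ring_nf

theorem continuous_eC_sum {n : ℕ} (ν : Fin n → ℤ) :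
    Continuous (fun x : Fin n → ℝ => eC (∑ i, (ν i : ℝ) * x i)) := by
  unfold eC
  fun_prop

noncomputable def repT (n : ℕ) (t : UnitAddTorus (Fin n)) : Fin n → ℝ :=
  (UnitAddTorus.measurableEquivPiIoc (fun _ : Fin n => -(1/2 : ℝ)) t).1

theorem coe_repT (n : ℕ) (t : UnitAddTorus (Fin n)) (i : Fin n) :
    ((repT n t i : ℝ) : UnitAddCircle) = t i :=
  congrFun ((UnitAddTorus.measurableEquivPiIoc (fun _ : Fin n => -(1/2 : ℝ))).symm_apply_apply t) i

theorem measurableSet_Q (n : ℕ) :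
    MeasurableSet {x : Fin n → ℝ | ∀ i, x i ∈ Ioc (-(1/2 : ℝ)) (-(1/2) + 1)} :=
  MeasurableSet.univ_pi' (fun i => measurableSet_Ioc)

theorem measurePreserving_repT (n : ℕ) :
    MeasurePreserving (repT n) volume (volume.restrict (box n)) := by
  have h1 := UnitAddTorus.measurePreserving_equivPiIoc (fun _ : Fin n => -(1/2 : ℝ))
  have h2 : MeasurePreserving
      (Subtype.val : {x : Fin n → ℝ // ∀ i, x i ∈ Ioc (-(1/2 : ℝ)) (-(1/2) + 1)} → _)
      (Measure.comap Subtype.val volume)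
      (volume.restrict {x : Fin n → ℝ | ∀ i, x i ∈ Ioc (-(1/2 : ℝ)) (-(1/2) + 1)}) :=
    ⟨measurable_subtype_coe, map_comap_subtype_coe (measurableSet_Q n) volume⟩
  have h3 : (volume.restrict {x : Fin n → ℝ | ∀ i, x i ∈ Ioc (-(1/2 : ℝ)) (-(1/2) + 1)})
      = volume.restrict (box n) := by
    apply Measure.restrict_congr_set
    have := Measure.univ_pi_Ioc_ae_eq_Icc (μ := fun _ : Fin n => (volume : Measure ℝ))
      (f := fun _ => -(1/2 : ℝ)) (g := fun _ => (1/2 : ℝ))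
    have e : {x : Fin n → ℝ | ∀ i, x i ∈ Ioc (-(1/2 : ℝ)) (-(1/2) + 1)}
      = Set.pi univ (fun _ => Ioc (-(1/2 : ℝ)) (1/2)) := by
      ext x
      norm_num [Set.mem_pi]
    rw [e]
    exact this
  rw [← h3]
  exact h2.comp h1

theorem measurableEmbedding_repT (n : ℕ) : MeasurableEmbedding (repT n) :=
  (MeasurableEmbedding.subtype_coe (measurableSet_Q n)).comp
    (UnitAddTorus.measurableEquivPiIoc (fun _ : Fin n => -(1/2 : ℝ))).measurableEmbedding

theorem integral_repT {n : ℕ} (u : (Fin n → ℝ) → ℂ) :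
    ∫ t, u (repT n t) = ∫ x in box n, u x :=
  (measurePreserving_repT n).integral_comp (measurableEmbedding_repT n) u

theorem mFourier_repT {n : ℕ} (ν : Fin n → ℤ) (t : UnitAddTorus (Fin n)) :
    UnitAddTorus.mFourier ν t = eC (∑ i, (ν i : ℝ) * repT n t i) := by
  have : ∀ i, fourier (ν i) (t i) = Complex.exp (2 * Real.pi * Complex.I * (ν i * repT n t i)) := by
    intro i
    rw [← coe_repT n t i, fourier_coe_apply]
    congr 1
    simp
    ring
  simp only [UnitAddTorus.mFourier, ContinuousMap.coe_mk, this, eC]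
  rw [← Complex.exp_sum]
  push_cast
  rw [Finset.mul_sum]

theorem mFourierCoeff_repT {n : ℕ} (u : (Fin n → ℝ) → ℂ) (ν : Fin n → ℤ) :
    UnitAddTorus.mFourierCoeff (fun t => u (repT n t)) ν = fourierCoeffT u ν := by
  unfold UnitAddTorus.mFourierCoeff fourierCoeffT
  rw [← integral_repT]
  congr 1
  ext t
  rw [mFourier_repT, smul_eq_mul, mul_comm]
  simp

theorem parseval_box {n : ℕ} {u v : (Fin n → ℝ) → ℂ}
    (hu : MemLp u 2 (volume.restrict (box n))) (hv : MemLp v 2 (volume.restrict (box n))) :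
    HasSum (fun ν => conj (fourierCoeffT u ν) * fourierCoeffT v ν)
      (∫ x in box n, conj (u x) * v x) := by
  have hU : MemLp (fun t => u (repT n t)) 2 volume :=
    hu.comp_measurePreserving (measurePreserving_repT n)
  have hV : MemLp (fun t => v (repT n t)) 2 volume :=
    hv.comp_measurePreserving (measurePreserving_repT n)
  have h := UnitAddTorus.hasSum_prod_mFourierCoeff hU.toLp hV.toLp
  have c : ∀ {w : (Fin n → ℝ) → ℂ} (hW : MemLp (fun t => w (repT n t)) 2 volume) (ν : Fin n → ℤ),
      UnitAddTorus.mFourierCoeff hW.toLp ν = fourierCoeffT w ν := by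
    intro w hW ν
    rw [← mFourierCoeff_repT]
    apply integral_congr_ae
    filter_upwards [hW.coeFn_toLp] with t ht
    rw [ht]
  simp only [c] at h
  convert h using 1
  rw [← integral_repT (fun x => conj (u x) * v x)]
  apply integral_congr_ae
  filter_upwards [hU.coeFn_toLp, hV.coeFn_toLp] with t h1 h2
  rw [h1, h2]

end Aux

/-- For `f ∈ L¹ ∩ L²(𝕋ⁿ)` with nonnegative Fourier coefficients and `g` continuous
periodic with nonnegative Fourier coefficients, `∫ |f|² g ≥ ĝ₀ ∫ |f|²`. -/
theorem integral_sq_mul_ge (n : ℕ) (f g : (Fin n → ℝ) → ℂ)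
    (hfp : IsPeriodic f) (hfi : IntegrableOn f (box n))
    (hf2 : IntegrableOn (fun x => ‖f x‖ ^ 2) (box n))
    (hf : ∀ ν, 0 ≤ fourierCoeffT f ν)
    (hgc : Continuous g) (hgp : IsPeriodic g)
    (hg : ∀ ν, 0 ≤ fourierCoeffT g ν) :
    fourierCoeffT g 0 * ∫ x in box n, ((‖f x‖ : ℂ)) ^ 2
      ≤ ∫ x in box n, ((‖f x‖ : ℂ)) ^ 2 * g x := by
  have hf2' : MemLp f 2 (volume.restrict (box n)) :=
    (memLp_two_iff_integrable_sq_norm hfi.1).2 hf2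
  obtain ⟨C, hC⟩ := (isCompact_Icc : IsCompact (box n)).exists_bound_of_continuousOn
    hgc.continuousOn
  have hm : MeasurableSet (box n) := measurableSet_Icc
  have hCae : ∀ᵐ x ∂(volume.restrict (box n)), ‖g x‖ ≤ C := by
    filter_upwards [ae_restrict_mem hm] with x hx using hC x hx
  have hgtop : MemLp g ⊤ (volume.restrict (box n)) :=
    memLp_top_of_bound hgc.aestronglyMeasurable C hCae
  have hfg : MemLp (fun x => g x * f x) 2 (volume.restrict (box n)) :=
    hf2'.mul hgtop
  have hg2 : MemLp g 2 (volume.restrict (box n)) := by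
    haveI : IsFiniteMeasure (volume.restrict (box n)) :=
      ⟨by rw [Measure.restrict_apply_univ]; exact isCompact_Icc.measure_lt_top⟩
    exact hgtop.mono_exponent le_top
  have key : ∀ ν, fourierCoeffT g 0 * fourierCoeffT f ν
      ≤ fourierCoeffT (fun x => g x * f x) ν := by
    intro ν
    have hu : MemLp (fun x => eC (∑ i, (ν i : ℝ) * x i) * conj (f x)) 2
        (volume.restrict (box n)) :=
      (hf2'.star).mul (memLp_top_of_bound (continuous_eC_sum ν).aestronglyMeasurable 1
        (by simp [norm_eC]))
    have hP := parseval_box hu hg2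
    have e1 : ∀ μ, conj (fourierCoeffT (fun x => eC (∑ i, (ν i : ℝ) * x i) * conj (f x)) μ)
        = fourierCoeffT f (ν - μ) := by
      intro μ
      unfold fourierCoeffT
      rw [← integral_conj]
      congr 1
      ext x
      simp only [map_mul, conj_eC, Complex.conj_conj, neg_neg]
      rw [mul_right_comm, ← eC_add, mul_comm]
      congr 2
      simp [sub_mul, Finset.sum_sub_distrib]
      try ring
    have e2 : (∫ x in box n, conj (eC (∑ i, (ν i : ℝ) * x i) * conj (f x)) * g x)
        = fourierCoeffT (fun x => g x * f x) ν := by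
      unfold fourierCoeffT
      congr 1
      ext x
      simp only [map_mul, conj_eC, Complex.conj_conj]
      ring
    simp only [e1] at hP
    rw [e2] at hP
    have := le_hasSum hP 0 (fun j _ => mul_nonneg (hf _) (hg _))
    rw [mul_comm]
    simpa using this
  have h1 := (parseval_box hf2' hf2').mul_left (fourierCoeffT g 0)
  have h2 := parseval_box hf2' hfg
  have hreal : ∀ ν, conj (fourierCoeffT f ν) = fourierCoeffT f ν := fun ν =>
    Complex.conj_eq_iff_im.2 (Complex.le_def.1 (hf ν)).2.symm
  have hle := hasSum_le (fun ν => by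
    rw [hreal]
    calc fourierCoeffT g 0 * (fourierCoeffT f ν * fourierCoeffT f ν)
        = fourierCoeffT f ν * (fourierCoeffT g 0 * fourierCoeffT f ν) := by ring
      _ ≤ _ := mul_le_mul_of_nonneg_left (key ν) (hf ν)) h1 h2
  convert hle using 2
  · congr 1
    ext x
    rw [Complex.conj_mul']
  · ext x
    rw [← Complex.conj_mul']
    ring
end

section
/- Let D ⊂ T^n and let g ∈ L¹(T^n) be a continuous function with nonnegative Fourier coefficients, supported in D, and with g(0) = 1. Then for any f ∈ L¹(T^n) ∩ L²(T^n) with nonnegative Fourier coefficients, ∫_{T^n} |f|² dx ≤ (ĝ₀)⁻¹ ∫_D |f|² dx, provided ĝ₀ > 0. -/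
open MeasureTheory Complex Set
open scoped ENNReal NNReal ComplexOrder

open UnitAddTorus
open scoped ComplexConjugate

noncomputable local instance wftMeasureSpace : MeasureSpace UnitAddCircle :=
  ⟨AddCircle.haarAddCircle⟩
local instance wftHaar : Measure.IsAddHaarMeasure (volume : Measure UnitAddCircle) :=
  inferInstanceAs (Measure.IsAddHaarMeasure AddCircle.haarAddCircle)
local instance wftProb : IsProbabilityMeasure (volume : Measure UnitAddCircle) :=
  inferInstanceAs (IsProbabilityMeasure AddCircle.haarAddCircle)

section torus
variable {d : Type*} [Fintype d]

lemma wft_coeff_congr {u v : UnitAddTorus d → ℂ} (h : u =ᵐ[volume] v) (k : d → ℤ) :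
    mFourierCoeff u k = mFourierCoeff v k := by
  unfold mFourierCoeff
  apply integral_congr_ae
  filter_upwards [h] with t ht
  rw [ht]

lemma wft_parseval {u v : UnitAddTorus d → ℂ} (hu : MemLp u 2) (hv : MemLp v 2) :
    HasSum (fun i ↦ conj (mFourierCoeff u i) * mFourierCoeff v i) (∫ t, conj (u t) * v t) := by
  have h := hasSum_prod_mFourierCoeff (hu.toLp u) (hv.toLp v)
  simp_rw [wft_coeff_congr hu.coeFn_toLp, wft_coeff_congr hv.coeFn_toLp] at h
  convert h using 1
  apply integral_congr_ae
  filter_upwards [hu.coeFn_toLp, hv.coeFn_toLp] with t h1 h2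
  rw [h1, h2]

lemma wft_bddmul (G : C(UnitAddTorus d, ℂ)) {F : UnitAddTorus d → ℂ} (hF : MemLp F 2) :
    MemLp (fun t => G t * F t) 2 := by
  refine MemLp.of_le_mul (c := ‖G‖) hF
    (G.continuous.aestronglyMeasurable.mul hF.aestronglyMeasurable) (.of_forall fun t => ?_)
  rw [norm_mul]
  gcongr
  exact G.norm_coe_le_norm t

lemma wft_conv (G : C(UnitAddTorus d, ℂ)) {F : UnitAddTorus d → ℂ} (hF : MemLp F 2)
    (k : d → ℤ) :
    HasSum (fun i ↦ mFourierCoeff G (k - i) * mFourierCoeff F i)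
      (mFourierCoeff (fun t => G t * F t) k) := by
  have hu : MemLp (fun t => conj (G t) * mFourier k t) 2 (volume : Measure (UnitAddTorus d)) := by
    have hc : Continuous (fun t => conj (G t) * mFourier k t) := by fun_prop
    exact ContinuousMap.memLp (p := 2) volume ℂ (ContinuousMap.mk _ hc)
  convert wft_parseval hu hF using 1
  · ext i
    congr 1
    unfold mFourierCoeff
    rw [← integral_conj]
    congr 1
    ext t
    rw [neg_sub, sub_eq_add_neg, mFourier_add]
    simp [mFourier_neg]
    ring
  · unfold mFourierCoeff
    congr 1
    ext t
    simp [mFourier_neg]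
    ring

lemma wft_conv_le (G : C(UnitAddTorus d, ℂ)) {F : UnitAddTorus d → ℂ} (hF : MemLp F 2)
    (hG0 : ∀ k, 0 ≤ mFourierCoeff G k) (hF0 : ∀ k, 0 ≤ mFourierCoeff F k) (k : d → ℤ) :
    mFourierCoeff G 0 * mFourierCoeff F k ≤ mFourierCoeff (fun t => G t * F t) k := by
  have := le_hasSum (wft_conv G hF k) k (fun i _ => mul_nonneg (hG0 _) (hF0 _))
  simpa using this

lemma wft_main (G : C(UnitAddTorus d, ℂ)) {F : UnitAddTorus d → ℂ} (hF : MemLp F 2)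
    (hG0 : ∀ k, 0 ≤ mFourierCoeff G k) (hF0 : ∀ k, 0 ≤ mFourierCoeff F k) :
    mFourierCoeff G 0 * ∫ t, conj (F t) * F t ≤ ∫ t, conj (F t) * (G t * F t) := by
  refine hasSum_le (fun i => ?_) ((wft_parseval hF hF).mul_left _) (wft_parseval hF (wft_bddmul G hF))
  have := wft_conv_le G hF hG0 hF0 i
  have h2 : conj (mFourierCoeff F i) = mFourierCoeff F i := 
    Complex.conj_eq_iff_im.2 (Complex.nonneg_iff.1 (hF0 i)).2.symm
  rw [h2]
  calc _ = mFourierCoeff F i * (mFourierCoeff G 0 * mFourierCoeff F i) := by ring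
    _ ≤ _ := mul_le_mul_of_nonneg_left this (hF0 i)

lemma wft_sumsq (G : C(UnitAddTorus d, ℂ)) (A : Finset (d → ℤ)) :
    ∑ a ∈ A, ∑ b ∈ A, mFourierCoeff G (a - b) =
      ∫ t, ((‖∑ a ∈ A, mFourier a t‖ ^ 2 : ℝ) : ℂ) * G t := by
  have hI : ∀ H : C(UnitAddTorus d, ℂ), Integrable (fun t => H t) := fun H =>
    H.continuous.integrable_of_hasCompactSupport (HasCompactSupport.of_compactSpace _)
  have : ∀ t, ((‖∑ a ∈ A, mFourier a t‖ ^ 2 : ℝ) : ℂ) * G t =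
      ∑ a ∈ A, ∑ b ∈ A, mFourier (-(a - b)) t • G t := by
    intro t
    push_cast
    rw [← Complex.mul_conj', map_sum, Finset.sum_mul_sum, Finset.sum_comm, Finset.sum_mul]
    refine Finset.sum_congr rfl fun a _ => ?_
    rw [Finset.sum_mul]
    refine Finset.sum_congr rfl fun b _ => ?_
    rw [neg_sub, sub_eq_add_neg, mFourier_add, mFourier_neg, smul_eq_mul]
  simp_rw [this]
  have hI2 : ∀ k : d → ℤ, Integrable (fun t => mFourier k t • G t) := fun k => hI (mFourier k * G)
  rw [integral_finsetSum _ fun a _ => integrable_finsetSum _ fun b _ => hI2 _]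
  refine Finset.sum_congr rfl fun a _ => ?_
  rw [integral_finsetSum _ fun b _ => hI2 _]
  rfl

lemma wft_coeff_one (k : d → ℤ) [Decidable (k = 0)] :
    mFourierCoeff (1 : C(UnitAddTorus d, ℂ)) k = if k = 0 then 1 else 0 := by
  classical
  have := orthonormal_iff_ite.1 (orthonormal_mFourier (d := d)) k 0
  rw [ContinuousMap.inner_toLp] at this
  unfold mFourierCoeff
  have h2 : ∫ t, mFourier (-k) t • (1 : C(UnitAddTorus d, ℂ)) t =
      ∫ x, mFourier 0 x * conj (mFourier k x) := by
    congr 1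
    ext t
    simp [mFourier_neg, mFourier_zero]
  rw [h2, this]
  congr

lemma wft_bound (G : C(UnitAddTorus d, ℂ)) (A : Finset (d → ℤ)) :
    (∑ a ∈ A, ∑ b ∈ A, mFourierCoeff G (a - b)).re ≤ ‖G‖ * A.card := by
  classical
  have h1 := wft_sumsq (1 : C(UnitAddTorus d, ℂ)) A
  simp_rw [wft_coeff_one, sub_eq_zero] at h1
  simp only [Finset.sum_ite_eq, ContinuousMap.one_apply, mul_one, integral_complex_ofReal] at h1
  have h3 : (∫ t, ‖∑ a ∈ A, mFourier a t‖ ^ 2) = (A.card : ℝ) := by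
    have := h1.symm
    rw [Finset.sum_ite_mem] at this
    simp only [Finset.inter_self, Finset.sum_const, nsmul_eq_mul, mul_one] at this
    exact_mod_cast this
  rw [wft_sumsq]
  refine (Complex.re_le_norm _).trans ?_
  rw [← h3, ← integral_const_mul]
  refine norm_integral_le_of_norm_le ?_ (.of_forall fun t => ?_)
  · have hc : Continuous fun t => ‖G‖ * ‖∑ a ∈ A, mFourier a t‖ ^ 2 := by fun_prop
    exact hc.integrable_of_hasCompactSupport (HasCompactSupport.of_compactSpace _)
  · rw [norm_mul, mul_comm]
    gcongr
    · exact G.norm_coe_le_norm t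
    · simp

lemma wft_summable (G : C(UnitAddTorus d, ℂ)) (hG0 : ∀ k, 0 ≤ mFourierCoeff G k) :
    Summable (mFourierCoeff G) := by
  classical
  have hre : ∀ k, mFourierCoeff G k = (((mFourierCoeff G k).re : ℝ) : ℂ) := fun k =>
    Complex.ext rfl (Complex.nonneg_iff.1 (hG0 k)).2.symm
  have hnn : ∀ k, 0 ≤ (mFourierCoeff G k).re := fun k => (Complex.nonneg_iff.1 (hG0 k)).1
  have key : Summable (fun k => (mFourierCoeff G k).re) := by
    refine summable_of_sum_le (c := ‖G‖ * 2 ^ Fintype.card d) hnn fun u => ?_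
    obtain ⟨R, hR⟩ : ∃ R : ℕ, ∀ k ∈ u, ∀ i, |k i| ≤ R := by
      refine ⟨∑ k ∈ u, ∑ i, (k i).natAbs, fun k hk i => ?_⟩
      have h1 : (k i).natAbs ≤ ∑ i, (k i).natAbs :=
        Finset.single_le_sum (f := fun i => (k i).natAbs) (fun _ _ => Nat.zero_le _)
          (Finset.mem_univ i)
      have h2 : ∑ i, (k i).natAbs ≤ ∑ k ∈ u, ∑ i, (k i).natAbs :=
        Finset.single_le_sum (f := fun k : d → ℤ => ∑ i, (k i).natAbs)
          (fun _ _ => Nat.zero_le _) hk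
      rw [Int.abs_eq_natAbs]
      exact_mod_cast h1.trans h2
    let B : ℕ → Finset (d → ℤ) := fun r => Fintype.piFinset fun _ => Finset.Icc (-(r : ℤ)) r
    have hBc : ∀ r, (B r).card = (2 * r + 1) ^ Fintype.card d := by
      intro r
      simp only [B, Fintype.card_piFinset, Int.card_Icc, Finset.prod_const, Finset.card_univ]
      congr 1
      omega
    have hb := wft_bound G (B (2 * R))
    have hlow : ((B R).card : ℝ) * ∑ k ∈ u, (mFourierCoeff G k).re ≤
        (∑ a ∈ B (2 * R), ∑ b ∈ B (2 * R), mFourierCoeff G (a - b)).re := by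
      rw [Finset.sum_comm]
      simp only [Complex.re_sum]
      rw [← nsmul_eq_mul, ← Finset.sum_const]
      refine (Finset.sum_le_sum fun b hb => ?_).trans
        (Finset.sum_le_sum_of_subset_of_nonneg (s := B R) ?_ ?_)
      · have him : u.image (fun k => k + b) ⊆ B (2 * R) := by
          intro x hx
          obtain ⟨k, hk, rfl⟩ := Finset.mem_image.1 hx
          simp only [B, Fintype.mem_piFinset, Finset.mem_Icc, Pi.add_apply] at hb ⊢
          intro i
          have := abs_le.1 (hR k hk i)
          have := hb i
          push_cast
          omega
        refine le_trans (le_of_eq ?_) (Finset.sum_le_sum_of_subset_of_nonneg him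
          fun _ _ _ => hnn _)
        rw [Finset.sum_image (by intro x _ y _ h; simpa using h)]
        simp
      · intro x hx
        simp only [B, Fintype.mem_piFinset, Finset.mem_Icc] at hx ⊢
        intro i
        have := hx i
        push_cast
        omega
      · intro b _ _
        exact Finset.sum_nonneg fun _ _ => hnn _
    have h := hlow.trans hb
    have hcpos : (0 : ℝ) < (B R).card := by
      rw [hBc]; positivity
    have hcc : ((B (2 * R)).card : ℝ) ≤ 2 ^ Fintype.card d * (B R).card := by
      have : (B (2 * R)).card ≤ 2 ^ Fintype.card d * (B R).card := by
        rw [hBc, hBc, ← mul_pow]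
        refine Nat.pow_le_pow_left ?_ _
        omega
      exact_mod_cast this
    refine le_of_mul_le_mul_left (h.trans ?_) hcpos
    calc ‖G‖ * ((B (2 * R)).card : ℝ) ≤ ‖G‖ * (2 ^ Fintype.card d * (B R).card) := by gcongr
      _ = _ := by ring
  rw [show mFourierCoeff G = fun k => (((mFourierCoeff G k).re : ℝ) : ℂ) from funext hre]
  exact Complex.summable_ofReal.2 key

lemma wft_norm_le (G : C(UnitAddTorus d, ℂ)) (hG0 : ∀ k, 0 ≤ mFourierCoeff G k)
    (h1 : G 0 = 1) (t : UnitAddTorus d) : ‖G t‖ ≤ 1 := by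
  have hs := wft_summable G hG0
  have h0 := hasSum_mFourier_series_apply_of_summable hs 0
  have ht := hasSum_mFourier_series_apply_of_summable hs t
  have hm : ∀ k : d → ℤ, mFourier k 0 = 1 := fun k => by simp [mFourier]
  have hm2 : ∀ k : d → ℤ, ‖mFourier k t‖ ≤ 1 := fun k => 
    ((mFourier k).norm_coe_le_norm t).trans mFourier_norm.le
  simp only [hm, h1, smul_eq_mul, mul_one] at h0
  have h0' := Complex.hasSum_re h0
  rw [← ht.tsum_eq]
  refine tsum_of_norm_bounded h0' fun k => ?_
  rw [norm_smul]
  have : ‖mFourierCoeff G k‖ = (mFourierCoeff G k).re :=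
    (Complex.re_eq_norm.2 (hG0 k)).symm
  rw [this]
  exact mul_le_of_le_one_right (Complex.nonneg_iff.1 (hG0 k)).1 (hm2 k)

end torus

section transfer
variable {n : ℕ}

/-- Descend a function on `ℝⁿ` to the torus through the fundamental domain. -/
noncomputable def wft_lift (f : (Fin n → ℝ) → ℂ) : UnitAddTorus (Fin n) → ℂ :=
  fun t => f (measurableEquivPiIoc (fun _ => -(1 / 2 : ℝ)) t).1

lemma wft_lift_coe {f : (Fin n → ℝ) → ℂ} (hf : IsPeriodic f) (x : Fin n → ℝ) :
    wft_lift f (fun i => (x i : UnitAddCircle)) = f x := by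
  unfold wft_lift
  set y := (measurableEquivPiIoc (fun _ => -(1 / 2 : ℝ)) (fun i => (x i : UnitAddCircle))).1
    with hy
  have h1 : ∀ i, ∃ m : ℤ, y i = x i + m := by
    intro i
    have h : ((y i : ℝ) : UnitAddCircle) = (x i : UnitAddCircle) := by
      rw [hy, coe_measurableEquivPiIoc_apply]
      exact AddCircle.coe_equivIoc (p := (1 : ℝ)) (a := (-(1 / 2 : ℝ)))
        (y := (x i : UnitAddCircle))
    have h' : ((y i - x i : ℝ) : UnitAddCircle) = 0 := by
      rw [AddCircle.coe_sub, h, sub_self]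
    obtain ⟨m, hm⟩ := (AddCircle.coe_eq_zero_iff (1 : ℝ)).1 h'
    refine ⟨m, ?_⟩
    simp at hm
    linarith
  choose m hm using h1
  have : y = x + fun i => (m i : ℝ) := by ext i; exact hm i
  rw [this, hf]

lemma wft_lift_cont {g : (Fin n → ℝ) → ℂ} (hgc : Continuous g) (hgp : IsPeriodic g) :
    Continuous (wft_lift g) := by
  have hq : IsOpenQuotientMap (Pi.map (fun (_ : Fin n) (x : ℝ) => (x : UnitAddCircle))) :=
    IsOpenQuotientMap.piMap fun _ => QuotientAddGroup.isOpenQuotientMap_mk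
  rw [← hq.continuous_comp_iff]
  have : wft_lift g ∘ (Pi.map (fun (_ : Fin n) (x : ℝ) => (x : UnitAddCircle))) = g :=
    funext fun x => wft_lift_coe hgp x
  rw [this]
  exact hgc

lemma wft_box_ae : ({x : Fin n → ℝ | ∀ i, x i ∈ Ioc (-(1 / 2 : ℝ)) (-(1 / 2 : ℝ) + 1)} :
    Set (Fin n → ℝ)) =ᵐ[volume] box n := by
  have h := Measure.univ_pi_Ioc_ae_eq_Icc (μ := fun _ : Fin n => (volume : Measure ℝ))
    (f := fun _ => -(1 / 2 : ℝ)) (g := fun _ => (1 / 2 : ℝ))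
  have e : ({x : Fin n → ℝ | ∀ i, x i ∈ Ioc (-(1 / 2 : ℝ)) (-(1 / 2 : ℝ) + 1)} :
    Set (Fin n → ℝ)) = Set.pi univ fun _ => Ioc (-(1 / 2 : ℝ)) (1 / 2) := by
    ext x
    norm_num [Set.mem_pi]
  rw [e]
  exact h

lemma wft_integral_eq (F : UnitAddTorus (Fin n) → ℂ) :
    ∫ t, F t = ∫ x in box n, F (fun i => (x i : UnitAddCircle)) := by
  rw [integral_preimage F (fun _ => -(1 / 2 : ℝ))]
  exact setIntegral_congr_set wft_box_ae

lemma wft_coeff_eq {f : (Fin n → ℝ) → ℂ} (hf : IsPeriodic f) (k : Fin n → ℤ) :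
    mFourierCoeff (wft_lift f) k = fourierCoeffT f k := by
  unfold mFourierCoeff fourierCoeffT
  rw [wft_integral_eq]
  congr 1
  ext x
  rw [wft_lift_coe hf, smul_eq_mul, mul_comm]
  congr 1
  simp only [mFourier, eC, ContinuousMap.coe_mk, fourier_coe_apply, ← Complex.exp_sum]
  congr 1
  push_cast
  rw [← Finset.sum_neg_distrib, Finset.mul_sum]
  refine Finset.sum_congr rfl fun i _ => ?_
  simp
  ring

lemma wft_lift_memLp {f : (Fin n → ℝ) → ℂ} (hf : MemLp f 2 (volume.restrict (box n))) :
    MemLp (wft_lift f) 2 := by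
  rw [← Measure.restrict_congr_set wft_box_ae] at hf
  have hm : MeasurableSet {x : Fin n → ℝ | ∀ i, x i ∈ Ioc (-(1 / 2 : ℝ)) (-(1 / 2 : ℝ) + 1)} :=
    MeasurableSet.univ_pi' (fun i => measurableSet_Ioc)
  rw [← map_comap_subtype_coe hm] at hf
  have h2 := (MeasurableEmbedding.subtype_coe hm).memLp_map_measure_iff.1 hf
  exact h2.comp_measurePreserving (measurePreserving_equivPiIoc (fun _ : Fin n => -(1 / 2 : ℝ)))

end transfer

/-- Wiener-type inequality obtained from an admissible Turán function `g`:
`∫_{𝕋ⁿ} |f|² ≤ (ĝ₀)⁻¹ ∫_D |f|²`. -/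
theorem wiener_from_turan (n : ℕ) (D : Set (Fin n → ℝ)) (hD : D ⊆ box n)
    (f g : (Fin n → ℝ) → ℂ)
    (hgc : Continuous g) (hgp : IsPeriodic g)
    (hg : ∀ ν, 0 ≤ fourierCoeffT g ν)
    (hgsupp : ∀ x ∈ box n, x ∉ D → g x = 0) (hg0 : g 0 = 1)
    (hgpos : 0 < (fourierCoeffT g 0).re)
    (hfp : IsPeriodic f) (hfi : IntegrableOn f (box n))
    (hf2 : IntegrableOn (fun x => ‖f x‖ ^ 2) (box n))
    (hf : ∀ ν, 0 ≤ fourierCoeffT f ν) :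
    ∫ x in box n, ‖f x‖ ^ 2 ≤ ((fourierCoeffT g 0).re)⁻¹ * ∫ x in D, ‖f x‖ ^ 2 := by
  have hGs := wft_lift_coe hgp
  have hFs := wft_lift_coe hfp
  let G : C(UnitAddTorus (Fin n), ℂ) := ⟨wft_lift g, wft_lift_cont hgc hgp⟩
  have hGt : ∀ t, G t = wft_lift g t := fun _ => rfl
  have hfm : MemLp f 2 (volume.restrict (box n)) :=
    (memLp_two_iff_integrable_sq_norm hfi.aestronglyMeasurable).2 hf2
  have hFm : MemLp (wft_lift f) 2 := wft_lift_memLp hfm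
  have hG0 : ∀ k, 0 ≤ mFourierCoeff G k := fun k => by
    have h : mFourierCoeff G k = fourierCoeffT g k := wft_coeff_eq hgp k
    rw [h]; exact hg k
  have hF0 : ∀ k, 0 ≤ mFourierCoeff (wft_lift f) k := fun k => by
    rw [wft_coeff_eq hfp k]; exact hf k
  have hGz : G 0 = 1 := by
    have := hGs 0
    rw [hg0] at this
    exact this
  have hGle := wft_norm_le G hG0 hGz
  have hgle : ∀ x, ‖g x‖ ≤ 1 := fun x => by
    rw [← hGs x]; exact hGle _
  have hG00 : mFourierCoeff G 0 = (((fourierCoeffT g 0).re : ℝ) : ℂ) := by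
    have h : mFourierCoeff G 0 = fourierCoeffT g 0 := wft_coeff_eq hgp 0
    rw [h]
    exact Complex.ext rfl (Complex.nonneg_iff.1 (hg 0)).2.symm
  have hmain := wft_main G hFm hG0 hF0
  rw [hG00, wft_integral_eq, wft_integral_eq] at hmain
  simp only [hGt, hGs, hFs] at hmain
  have e1 : ∀ x, conj (f x) * f x = ((‖f x‖ ^ 2 : ℝ) : ℂ) := fun x => by
    rw [Complex.conj_mul']; push_cast; rfl
  simp only [e1, integral_complex_ofReal] at hmain
  rw [← Complex.ofReal_mul] at hmain
  have h1 := (Complex.le_def.1 hmain).1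
  rw [Complex.ofReal_re] at h1
  have hbm : MeasurableSet (box n) := measurableSet_Icc
  have hgf : IntegrableOn (fun x => ‖g x‖ * ‖f x‖ ^ 2) (box n) := by
    refine Integrable.mono hf2 (hgc.norm.aestronglyMeasurable.mul hf2.aestronglyMeasurable)
      (.of_forall fun x => ?_)
    rw [norm_mul, norm_norm]
    exact mul_le_of_le_one_left (norm_nonneg _) (hgle x)
  have h2 : (∫ x in box n, conj (f x) * (g x * f x)).re ≤ ∫ x in box n, ‖g x‖ * ‖f x‖ ^ 2 := by
    refine (Complex.re_le_norm _).trans (norm_integral_le_of_norm_le hgf (.of_forall fun x => ?_))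
    simp only [norm_mul, RCLike.norm_conj]
    apply le_of_eq
    ring
  let S : Set (Fin n → ℝ) := box n ∩ {x | g x ≠ 0}
  have hSm : MeasurableSet S :=
    hbm.inter (isOpen_ne_fun hgc continuous_const).measurableSet
  have hSD : S ⊆ D := fun x hx => by
    by_contra hxD
    exact hx.2 (hgsupp x hx.1 hxD)
  have h3 : ∫ x in box n, ‖g x‖ * ‖f x‖ ^ 2 = ∫ x in S, ‖g x‖ * ‖f x‖ ^ 2 := by
    refine setIntegral_eq_of_subset_of_forall_sdiff_eq_zero hbm inter_subset_left fun x hx => ?_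
    have : g x = 0 := by
      by_contra h
      exact hx.2 ⟨hx.1, h⟩
    simp [this]
  have h4 : ∫ x in S, ‖g x‖ * ‖f x‖ ^ 2 ≤ ∫ x in S, ‖f x‖ ^ 2 := by
    refine integral_mono (hgf.mono_set inter_subset_left) (hf2.mono_set inter_subset_left)
      fun x => ?_
    exact mul_le_of_le_one_left (by positivity) (hgle x)
  have h5 : ∫ x in S, ‖f x‖ ^ 2 ≤ ∫ x in D, ‖f x‖ ^ 2 :=
    integral_mono_measure (Measure.restrict_mono hSD le_rfl)
      (.of_forall fun x => by positivity) (hf2.mono_set hD)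
  rw [le_inv_mul_iff₀ hgpos]
  linarith
end

section
/- Hlawka's inequality: for every origin-symmetric convex body D ⊂ T^n and every f ∈ L¹(T^n) with nonnegative Fourier coefficients, ∫_{T^n} |f|² dx ≤ |D/2|⁻¹ ∫_D |f|² dx, where |D/2| = 2⁻ⁿ|D|. Equivalently, W_n(D) ≤ 2ⁿ. -/
open MeasureTheory Complex Set
open scoped ENNReal NNReal ComplexOrder Pointwise

/-- Wiener's sharp constant `W_n(D)`: the smallest constant `C` such that
`∫_{𝕋ⁿ}|f|² ≤ C |D|⁻¹ ∫_D |f|²` for every periodic integrable `f` with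
nonnegative Fourier coefficients. -/
noncomputable def Wconst (n : ℕ) (D : Set (Fin n → ℝ)) : ℝ :=
  sInf {C : ℝ | ∀ f : (Fin n → ℝ) → ℂ, IsPeriodic f → IntegrableOn f (box n) →
    (∀ ν, 0 ≤ fourierCoeffT f ν) →
    ∫⁻ x in box n, (‖f x‖₊ : ℝ≥0∞) ^ 2 ≤
      ENNReal.ofReal C * (volume D)⁻¹ * ∫⁻ x in D, (‖f x‖₊ : ℝ≥0∞) ^ 2}


open Filter Topology UnitAddTorus
open scoped ComplexConjugate

section Torus

noncomputable local instance hlawkaMS : MeasureSpace UnitAddCircle := ⟨AddCircle.haarAddCircle⟩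

local instance hlawkaHaar : Measure.IsAddHaarMeasure (volume : Measure UnitAddCircle) :=
  inferInstanceAs (Measure.IsAddHaarMeasure AddCircle.haarAddCircle)

local instance hlawkaProb : IsProbabilityMeasure (volume : Measure UnitAddCircle) :=
  inferInstanceAs (IsProbabilityMeasure AddCircle.haarAddCircle)

variable {d : Type*} [Fintype d]

theorem hl_unique {F : UnitAddTorus d → ℂ} (hF : Integrable F)
    (h : ∀ k, mFourierCoeff F k = 0) : F =ᵐ[volume] 0 := by
  have key : ∀ φ : C(UnitAddTorus d, ℂ), ∫ t, φ t * F t = 0 := by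
    have hint : ∀ φ : C(UnitAddTorus d, ℂ), Integrable (fun t => φ t * F t) := fun φ =>
      hF.bdd_mul (c := ‖φ‖) φ.continuous.aestronglyMeasurable
        (Eventually.of_forall fun t => φ.norm_coe_le_norm t)
    let L0 : C(UnitAddTorus d, ℂ) →ₗ[ℂ] ℂ :=
      { toFun := fun φ => ∫ t, φ t * F t
        map_add' := fun φ ψ => by
          simp only [ContinuousMap.add_apply, add_mul]
          exact integral_add (hint φ) (hint ψ)
        map_smul' := fun c φ => by
          simp only [ContinuousMap.smul_apply, smul_eq_mul, mul_assoc, RingHom.id_apply]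
          exact integral_const_mul _ _ }
    let L : C(UnitAddTorus d, ℂ) →L[ℂ] ℂ := L0.mkContinuous (∫ t, ‖F t‖) (fun φ => by
      change ‖∫ t, φ t * F t‖ ≤ _
      refine (norm_integral_le_integral_norm _).trans ?_
      rw [mul_comm, ← integral_const_mul]
      refine integral_mono (hint φ).norm (hF.norm.const_mul _) fun t => ?_
      simp only [norm_mul]
      exact mul_le_mul_of_nonneg_right (φ.norm_coe_le_norm t) (norm_nonneg _))
    have hker : (⊤ : Submodule ℂ C(UnitAddTorus d, ℂ)) ≤ LinearMap.ker (L : C(UnitAddTorus d, ℂ) →ₗ[ℂ] ℂ) := by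
      rw [← span_mFourier_closure_eq_top]
      refine Submodule.topologicalClosure_minimal _ ?_ L.isClosed_ker
      rw [Submodule.span_le]
      rintro _ ⟨k, rfl⟩
      have := h (-k)
      rw [mFourierCoeff, neg_neg] at this
      exact this
    intro φ
    exact hker (Submodule.mem_top (x := φ))
  refine ae_eq_zero_of_forall_setIntegral_isClosed_eq_zero hF fun s hs => ?_
  have hpos : ∀ n : ℕ, (0 : ℝ) < 1 / ((n : ℝ) + 1) := fun n => by positivity
  have hlim := thickenedIndicator_tendsto_indicator_closure hpos
    tendsto_one_div_add_atTop_nhds_zero_nat s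
  rw [hs.closure_eq, tendsto_pi_nhds] at hlim
  have h0 : ∀ n : ℕ, ∫ t, ((thickenedIndicator (hpos n) s t : ℝ) : ℂ) * F t = 0 := fun n =>
    key ⟨fun t => ((thickenedIndicator (hpos n) s t : ℝ) : ℂ), by fun_prop⟩
  have hT : Tendsto (fun n : ℕ => ∫ t, ((thickenedIndicator (hpos n) s t : ℝ) : ℂ) * F t) atTop
      (𝓝 (∫ t, s.indicator F t)) := by
    refine tendsto_integral_of_dominated_convergence (fun t => ‖F t‖) ?_ hF.norm ?_ ?_
    · intro n
      refine AEStronglyMeasurable.mul ?_ hF.aestronglyMeasurable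
      refine Continuous.aestronglyMeasurable ?_
      fun_prop
    · intro n
      refine Eventually.of_forall fun t => ?_
      rw [norm_mul]
      refine mul_le_of_le_one_left (norm_nonneg _) ?_
      have := thickenedIndicator_le_one (hpos n) s t
      simpa using this
    · refine Eventually.of_forall fun t => ?_
      have h1 := hlim t
      have h2 : Tendsto (fun n : ℕ => ((thickenedIndicator (hpos n) s t : ℝ) : ℂ)) atTop
          (𝓝 (((s.indicator (fun _ => (1 : ℝ≥0)) t : ℝ≥0) : ℝ) : ℂ)) :=
        (Complex.continuous_ofReal.tendsto _).comp ((NNReal.continuous_coe.tendsto _).comp h1)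
      have h3 := h2.mul_const (F t)
      convert h3 using 2
      by_cases ht : t ∈ s <;> simp [ht]
  rw [← integral_indicator hs.measurableSet]
  simp only [h0] at hT
  exact (tendsto_nhds_unique hT tendsto_const_nhds)

theorem hl_unique' {F H : UnitAddTorus d → ℂ} (hF : Integrable F) (hH : Integrable H)
    (h : ∀ k, mFourierCoeff F k = mFourierCoeff H k) : F =ᵐ[volume] H := by
  have hm : ∀ (F : UnitAddTorus d → ℂ) (_ : Integrable F) k,
      Integrable (fun t => mFourier (-k) t • F t) := fun F hF k =>
    hF.bdd_mul (c := ‖mFourier (d := d) (-k)‖) (mFourier (-k)).continuous.aestronglyMeasurable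
        (Eventually.of_forall fun t => (mFourier (-k)).norm_coe_le_norm t)
  have := hl_unique (hF.sub hH) (fun k => by
    have := h k
    simp only [mFourierCoeff] at this ⊢
    simp only [Pi.sub_apply, smul_sub]
    rw [integral_sub (hm F hF k) (hm H hH k), this, sub_self])
  filter_upwards [this] with t ht
  simpa [sub_eq_zero] using ht

theorem hl_mFourier_sub (k : d → ℤ) (x y : UnitAddTorus d) :
    mFourier k (x - y) = mFourier k x * conj (mFourier k y) := by
  simp only [mFourier, ContinuousMap.coe_mk, Pi.sub_apply, map_prod, ← Finset.prod_mul_distrib]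
  refine Finset.prod_congr rfl fun i _ => ?_
  simp [fourier_apply, sub_eq_add_neg, smul_add, AddCircle.toCircle_add, AddCircle.toCircle_neg,
    ← Circle.coe_inv_eq_conj]

theorem hl_finite (a : (d → ℤ) → ℝ) (ha : ∀ k, 0 ≤ a k) (s : Finset (d → ℤ))
    {K : Set (UnitAddTorus d)} (hK : IsCompact K) :
    volume.real K * ∑ k ∈ s, a k ^ 2 ≤
      ∫ t in K - K, ‖(∑ k ∈ s, (a k : ℂ) • mFourier k : C(UnitAddTorus d, ℂ)) t‖ ^ 2 := by
  set P : C(UnitAddTorus d, ℂ) := ∑ k ∈ s, (a k : ℂ) • mFourier k with hP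
  have hKK : IsCompact (K - K) := by
    rw [sub_eq_add_neg]; exact hK.add hK.neg
  set M : ℝ := volume.real K with hM
  set I : ℝ := ∫ t in K - K, ‖P t‖ ^ 2 with hI
  have hI0 : 0 ≤ I := integral_nonneg fun _ => by positivity
  have hcont : Continuous fun t => ‖P t‖ ^ 2 := by fun_prop
  have hint : Integrable (fun t => ‖P t‖ ^ 2) :=
    hcont.integrable_of_hasCompactSupport (HasCompactSupport.of_compactSpace _)
  have hup : ∀ y ∈ K, ∫ x in K, ‖P (x - y)‖ ^ 2 ≤ I := by
    intro y hy
    rw [hI, ← integral_indicator hK.measurableSet, ← integral_indicator hKK.measurableSet]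
    rw [← integral_sub_right_eq_self ((K - K).indicator fun t => ‖P t‖ ^ 2) y]
    refine integral_mono_of_nonneg (Eventually.of_forall fun x => ?_)
      ((hint.indicator hKK.measurableSet).comp_sub_right y) (Eventually.of_forall fun x => ?_)
    · exact indicator_nonneg (fun _ _ => by positivity) _
    · by_cases hx : x ∈ K
      · have : x - y ∈ K - K := ⟨x, hx, y, hy, rfl⟩
        simp [hx, this]
      · simp only [indicator_of_notMem hx]
        exact indicator_nonneg (fun _ _ => by positivity) _
  have hcont2 : Continuous fun y => ∫ x in K, ‖P (x - y)‖ ^ 2 :=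
    continuous_parametric_integral_of_continuous (by fun_prop) hK
  have hup2 : ∫ y in K, ∫ x in K, ‖P (x - y)‖ ^ 2 ≤ M * I := by
    have := setIntegral_mono_on (f := fun y => ∫ x in K, ‖P (x - y)‖ ^ 2) (g := fun _ => I)
      (hcont2.continuousOn.integrableOn_compact hK)
      (integrableOn_const (μ := volume) hK.measure_lt_top.ne) hK.measurableSet hup
    simpa [hM] using this
  let E : (d → ℤ) → ℂ := fun m => ∫ x in K, mFourier m x
  have hexp : ∀ x y, ((‖P (x - y)‖ ^ 2 : ℝ) : ℂ) = ∑ j ∈ s, ∑ k ∈ s,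
      ((a j * a k : ℝ) : ℂ) * (mFourier (k - j) x * conj (mFourier (k - j) y)) := by
    intro x y
    push_cast
    rw [← Complex.conj_mul' , hP]
    simp only [ContinuousMap.coe_sum, Finset.sum_apply, ContinuousMap.smul_apply, map_sum,
      Finset.sum_mul_sum, smul_eq_mul, map_mul, Complex.conj_ofReal, ← mFourier_neg]
    refine Finset.sum_congr rfl fun j _ => Finset.sum_congr rfl fun k _ => ?_
    rw [mFourier_neg (n := k - j), ← hl_mFourier_sub, sub_eq_add_neg k j, mFourier_add]
    ring
  have hci : ∀ f : UnitAddTorus d → ℂ, Continuous f → Integrable f (volume.restrict K) :=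
    fun f hf => hf.continuousOn.integrableOn_compact hK
  have hval : ((∫ y in K, ∫ x in K, ‖P (x - y)‖ ^ 2 : ℝ) : ℂ) =
      ∑ j ∈ s, ∑ k ∈ s, ((a j * a k * ‖E (k - j)‖ ^ 2 : ℝ) : ℂ) := by
    rw [← integral_complex_ofReal]
    simp_rw [← integral_complex_ofReal, hexp]
    have h1 : ∀ y, ∫ x in K, ∑ j ∈ s, ∑ k ∈ s,
        ((a j * a k : ℝ) : ℂ) * (mFourier (k - j) x * conj (mFourier (k - j) y)) =
        ∑ j ∈ s, ∑ k ∈ s, ((a j * a k : ℝ) : ℂ) * (E (k - j) * conj (mFourier (k - j) y)) := by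
      intro y
      rw [integral_finsetSum _ fun j _ => hci _ (by fun_prop)]
      refine Finset.sum_congr rfl fun j _ => ?_
      rw [integral_finsetSum _ fun j _ => hci _ (by fun_prop)]
      refine Finset.sum_congr rfl fun k _ => ?_
      rw [integral_const_mul, integral_mul_const]
    simp_rw [h1]
    rw [integral_finsetSum _ fun j _ => hci _ (by fun_prop)]
    refine Finset.sum_congr rfl fun j _ => ?_
    rw [integral_finsetSum _ fun j _ => hci _ (by fun_prop)]
    refine Finset.sum_congr rfl fun k _ => ?_
    rw [integral_const_mul, integral_const_mul, integral_conj]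
    change _ * (E (k - j) * conj (E (k - j))) = _
    rw [Complex.mul_conj']
    push_cast
    ring
  have hval' : ∫ y in K, ∫ x in K, ‖P (x - y)‖ ^ 2 =
      ∑ j ∈ s, ∑ k ∈ s, a j * a k * ‖E (k - j)‖ ^ 2 := by exact_mod_cast hval
  have hE0 : ‖E 0‖ = M := by
    simp [E, mFourier_zero, hM]
  have hlow : M ^ 2 * ∑ k ∈ s, a k ^ 2 ≤ ∑ j ∈ s, ∑ k ∈ s, a j * a k * ‖E (k - j)‖ ^ 2 := by
    rw [Finset.mul_sum]
    refine Finset.sum_le_sum fun j hj => ?_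
    have := Finset.single_le_sum (f := fun k => a j * a k * ‖E (k - j)‖ ^ 2)
      (fun k _ => mul_nonneg (mul_nonneg (ha j) (ha k)) (by positivity)) hj
    simp only [sub_self, hE0] at this
    linarith [this]
  have hfin : M ^ 2 * ∑ k ∈ s, a k ^ 2 ≤ M * I := by
    rw [hval'] at hup2
    exact hlow.trans hup2
  have hM0 : 0 ≤ M := measureReal_nonneg
  rcases hM0.eq_or_lt with h0 | h0
  · rw [← h0, zero_mul]; exact hI0
  · have : M * (M * ∑ k ∈ s, a k ^ 2) ≤ M * I := by linarith
    exact le_of_mul_le_mul_left this h0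

theorem hl_summable (a : (d → ℤ) → ℝ) (ha : ∀ k, 0 ≤ a k)
    {S : C(UnitAddTorus d, ℂ)} (hS : HasSum (fun k => (a k : ℂ) • mFourier k) S)
    {K : Set (UnitAddTorus d)} (hK : IsCompact K) (s : Finset (d → ℤ)) :
    volume.real K * ∑ k ∈ s, a k ^ 2 ≤ ∫ t in K - K, ‖S t‖ ^ 2 := by
  have hKK : IsCompact (K - K) := by
    rw [sub_eq_add_neg]; exact hK.add hK.neg
  have hc : ContinuousAt (fun φ : C(UnitAddTorus d, ℂ) => ∫ t in K - K, ‖φ t‖ ^ 2) S := by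
    refine continuousAt_of_dominated (bound := fun _ => (‖S‖ + 1) ^ 2) ?_ ?_ ?_ ?_
    · exact Eventually.of_forall fun φ => Continuous.aestronglyMeasurable (by fun_prop)
    · have : ∀ᶠ φ : C(UnitAddTorus d, ℂ) in 𝓝 S, ‖φ‖ < ‖S‖ + 1 :=
        continuous_norm.continuousAt.eventually_lt_const (by linarith)
      filter_upwards [this] with φ hφ
      refine Eventually.of_forall fun t => ?_
      rw [norm_pow, norm_norm]
      have := φ.norm_coe_le_norm t
      gcongr
      linarith
    · exact integrable_const _
    · exact Eventually.of_forall fun t => Continuous.continuousAt (by fun_prop)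
  have hT := hc.tendsto.comp hS
  refine ge_of_tendsto hT ?_
  filter_upwards [eventually_ge_atTop s] with s' hs'
  refine le_trans ?_ (hl_finite a ha s' hK)
  exact mul_le_mul_of_nonneg_left
    (Finset.sum_le_sum_of_subset_of_nonneg hs' fun _ _ _ => by positivity) measureReal_nonneg

noncomputable def hlAvg (β : Measure (UnitAddTorus d)) (F : UnitAddTorus d → ℂ)
    (t : UnitAddTorus d) : ℂ := ∫ u, F (t - u) ∂β

theorem hlAvg_aux (β : Measure (UnitAddTorus d)) [IsProbabilityMeasure β]
    {F : UnitAddTorus d → ℂ} (hF : Integrable F) :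
    Integrable (fun p : UnitAddTorus d × UnitAddTorus d => F (p.1 - p.2)) (volume.prod β) := by
  have h := (measurePreserving_sub_prod (volume : Measure (UnitAddTorus d)) β)
  have h2 : Integrable (fun p : UnitAddTorus d × UnitAddTorus d => F p.1) (volume.prod β) :=
    hF.comp_fst β
  exact h.integrable_comp_of_integrable h2

theorem hlAvg_integrable (β : Measure (UnitAddTorus d)) [IsProbabilityMeasure β]
    {F : UnitAddTorus d → ℂ} (hF : Integrable F) : Integrable (hlAvg β F) :=
  (hlAvg_aux β hF).integral_prod_left

theorem hlAvg_coeff (β : Measure (UnitAddTorus d)) [IsProbabilityMeasure β]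
    {F : UnitAddTorus d → ℂ} (hF : Integrable F) (k : d → ℤ) :
    mFourierCoeff (hlAvg β F) k = mFourierCoeff F k * ∫ u, mFourier (-k) u ∂β := by
  have hadd : ∀ x y : UnitAddTorus d, mFourier (-k) (x + y) = mFourier (-k) x * mFourier (-k) y := by
    intro x y
    simp only [mFourier, ContinuousMap.coe_mk, Pi.add_apply, ← Finset.prod_mul_distrib]
    refine Finset.prod_congr rfl fun i _ => ?_
    simp [fourier_apply, smul_add, AddCircle.toCircle_add]
  simp only [mFourierCoeff, hlAvg, smul_eq_mul]
  simp_rw [← integral_const_mul]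
  rw [integral_integral_swap]
  · congr 1
    ext u
    rw [← integral_add_right_eq_self _ u, ← integral_mul_const]
    congr 1
    ext t
    simp only [add_sub_cancel_right, hadd]
    ring
  · have := (hlAvg_aux β hF).bdd_mul (c := ‖mFourier (d := d) (-k)‖)
      (f := fun p : UnitAddTorus d × UnitAddTorus d => mFourier (-k) p.1)
      (Continuous.aestronglyMeasurable (by fun_prop))
      (Eventually.of_forall fun p => (mFourier (-k)).norm_coe_le_norm p.1)
    exact this

theorem hl_sq_le {α : Type*} [MeasurableSpace α] (β : Measure α) [IsProbabilityMeasure β]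
    {g : α → ℂ} (hg : AEStronglyMeasurable g β) :
    ‖∫ u, g u ∂β‖ₑ ^ 2 ≤ ∫⁻ u, ‖g u‖ₑ ^ 2 ∂β := by
  have h1 := enorm_integral_le_lintegral_enorm (μ := β) g
  have h2 := eLpNorm_le_eLpNorm_of_exponent_le (p := 1) (q := 2) (by norm_num) hg
  rw [eLpNorm_one_eq_lintegral_enorm] at h2
  have h3 := pow_le_pow_left' (h1.trans h2) 2
  refine h3.trans_eq ?_
  have := eLpNorm_nnreal_pow_eq_lintegral (μ := β) (f := g) (p := 2) (by norm_num)
  simpa using this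

theorem hlAvg_sq (β : Measure (UnitAddTorus d)) [IsProbabilityMeasure β]
    {F : UnitAddTorus d → ℂ} (hF : Integrable F) {A B U : Set (UnitAddTorus d)}
    (hA : MeasurableSet A) (hU : MeasurableSet U)
    (hB : ∀ᵐ u ∂β, u ∈ B) (hABU : ∀ t ∈ A, ∀ u ∈ B, t - u ∈ U) :
    ∫⁻ t in A, ‖hlAvg β F t‖ₑ ^ 2 ≤ ∫⁻ t in U, ‖F t‖ₑ ^ 2 := by
  have hae : ∀ᵐ t, AEStronglyMeasurable (fun u => F (t - u)) β :=
    (hlAvg_aux β hF).aestronglyMeasurable.prodMk_left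
  have hm : AEMeasurable (fun p : UnitAddTorus d × UnitAddTorus d => ‖F (p.1 - p.2)‖ₑ ^ 2)
      (volume.prod β) := ((hlAvg_aux β hF).aestronglyMeasurable.enorm).pow_const 2
  have hm2 : AEMeasurable (fun p : UnitAddTorus d × UnitAddTorus d => ‖F (p.1 - p.2)‖ₑ ^ 2)
      ((volume.restrict A).prod β) := by
    refine hm.mono_measure ?_
    exact Measure.prod_mono Measure.restrict_le_self le_rfl
  calc ∫⁻ t in A, ‖hlAvg β F t‖ₑ ^ 2 ≤ ∫⁻ t in A, ∫⁻ u, ‖F (t - u)‖ₑ ^ 2 ∂β := by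
        refine lintegral_mono_ae (ae_restrict_of_ae ?_)
        filter_upwards [hae] with t ht
        exact hl_sq_le β ht
    _ = ∫⁻ u, (∫⁻ t in A, ‖F (t - u)‖ₑ ^ 2) ∂β := lintegral_lintegral_swap hm2
    _ ≤ ∫⁻ u, (∫⁻ t in U, ‖F t‖ₑ ^ 2) ∂β := by
        refine lintegral_mono_ae ?_
        filter_upwards [hB] with u hu
        rw [← lintegral_indicator hA, ← lintegral_indicator hU,
          ← lintegral_sub_right_eq_self (U.indicator fun t => ‖F t‖ₑ ^ 2) u]
        refine lintegral_mono fun t => ?_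
        by_cases ht : t ∈ A
        · simp [ht, hABU t ht u hu]
        · simp [ht]
    _ = _ := by simp

theorem hl_coeff_sq_summable {B : Set (UnitAddTorus d)} (hB : MeasurableSet B) :
    Summable fun k : d → ℤ => ‖∫ u in B, mFourier (-k) u‖ ^ 2 := by
  have hL : MemLp (B.indicator (fun _ : UnitAddTorus d => (1 : ℂ))) 2 volume :=
    (memLp_const (1 : ℂ)).indicator hB
  have := (hasSum_sq_mFourierCoeff hL.toLp).summable
  refine this.congr fun k => ?_
  congr 2
  rw [← integral_indicator hB, mFourierCoeff]
  refine integral_congr_ae ?_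
  filter_upwards [hL.coeFn_toLp] with t ht
  rw [ht]
  by_cases h : t ∈ B <;> simp [h]

theorem hl_hasSum (c : (d → ℤ) → ℂ) (hc : Summable c) :
    ∃ S : C(UnitAddTorus d, ℂ), HasSum (fun k => c k • mFourier k) S ∧
      ∀ k, mFourierCoeff S k = c k := by
  have hs : Summable (fun k => c k • mFourier (d := d) k) := by
    refine Summable.of_norm ?_
    simpa [norm_smul, mFourier_norm] using hc.norm
  refine ⟨_, hs.hasSum, fun k => ?_⟩
  have h1 : HasSum (fun j => c j • mFourierLp (d := d) 2 j)
      (ContinuousMap.toLp (E := ℂ) 2 volume ℂ (∑' k, c k • mFourier (d := d) k)) := by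
    have := (ContinuousMap.toLp (α := UnitAddTorus d) (E := ℂ) 2 volume ℂ).hasSum hs.hasSum
    simpa using this
  rw [← mFourierCoeff_toLp, ← mFourierBasis_repr, HilbertBasis.repr_apply_apply]
  have h2 := (innerSL ℂ (mFourierBasis (d := d) k)).hasSum h1
  refine h2.unique ?_
  have h3 := hasSum_ite_eq (α := ℂ) k (c k)
  refine h3.congr_fun fun j => ?_
  simp only [innerSL_apply_apply, inner_smul_right, coe_mFourierBasis]
  have := (orthonormal_iff_ite.1 (orthonormal_mFourier (d := d))) k j
  rw [this]
  by_cases h : j = k <;> simp [h, Ne.symm]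

theorem hl_b_tendsto {r : ℕ → ℝ} (hr : Tendsto r atTop (𝓝 0))
    (β : ℕ → Measure (UnitAddTorus d)) [∀ m, IsProbabilityMeasure (β m)]
    (hβ : ∀ m, ∀ᵐ u ∂(β m), u ∈ Metric.ball (0 : UnitAddTorus d) (r m)) (k : d → ℤ) :
    Tendsto (fun m => ∫ u, mFourier (-k) u ∂(β m)) atTop (𝓝 1) := by
  have h0 : mFourier (-k) (0 : UnitAddTorus d) = 1 := by
    simp [mFourier]
  rw [Metric.tendsto_atTop]
  intro η hη
  have hc := (mFourier (d := d) (-k)).continuous.continuousAt (x := 0)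
  rw [Metric.continuousAt_iff] at hc
  obtain ⟨δ, hδ, h⟩ := hc (η / 2) (by positivity)
  obtain ⟨N, hN⟩ := (hr.eventually_lt_const hδ).exists_forall_of_atTop
  refine ⟨N, fun m hm => ?_⟩
  have hint : Integrable (fun u => mFourier (d := d) (-k) u) (β m) :=
    (mFourier (-k)).continuous.integrable_of_hasCompactSupport (HasCompactSupport.of_compactSpace _)
  have h1 : ∫ u, mFourier (-k) u ∂(β m) - 1 = ∫ u, (mFourier (-k) u - 1) ∂(β m) := by
    rw [integral_sub hint (integrable_const _)]
    simp
  rw [dist_eq_norm, h1]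
  have h2 : ‖∫ u, (mFourier (-k) u - 1) ∂(β m)‖ ≤ η / 2 * (β m).real univ := by
    refine norm_integral_le_of_norm_le_const ?_
    filter_upwards [hβ m] with u hu
    have := h (x := u) ((Metric.mem_ball.1 hu).trans (hN m hm))
    rw [h0, dist_eq_norm] at this
    exact this.le
  simp only [probReal_univ, mul_one] at h2
  linarith

theorem hl_smooth {F : UnitAddTorus d → ℂ} (hF : Integrable F)
    (a : (d → ℤ) → ℝ) (ha : ∀ k, 0 ≤ a k) (haF : ∀ k, mFourierCoeff F k = a k)
    {K U : Set (UnitAddTorus d)} (hK : IsCompact K) (hU : MeasurableSet U) {r : ℝ} (hr : 0 < r)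
    (hKU : Metric.thickening (2 * r) (K - K) ⊆ U) (s : Finset (d → ℤ)) :
    volume K * ENNReal.ofReal (∑ k ∈ s, (a k * ‖∫ u, mFourier (-k) u
      ∂(ProbabilityTheory.cond volume (Metric.ball (0 : UnitAddTorus d) r))‖ ^ 2) ^ 2) ≤
      ∫⁻ t in U, ‖F t‖ₑ ^ 2 := by
  set B := Metric.ball (0 : UnitAddTorus d) r with hB
  set β := ProbabilityTheory.cond volume B with hβ
  have hBpos : volume B ≠ 0 := (Metric.measure_ball_pos volume 0 hr).ne'
  have : IsProbabilityMeasure β := ProbabilityTheory.cond_isProbabilityMeasure hBpos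
  set β' := β.map (fun u => -u) with hβ'
  have : IsProbabilityMeasure β' := Measure.isProbabilityMeasure_map (by fun_prop)
  have hBm : MeasurableSet B := Metric.isOpen_ball.measurableSet
  have hβB : ∀ᵐ u ∂β, u ∈ B := ProbabilityTheory.ae_cond_mem hBm
  have hβ'B : ∀ᵐ u ∂β', u ∈ B := by
    rw [hβ', ae_map_iff (p := fun u => u ∈ B) (by fun_prop) hBm]
    filter_upwards [hβB] with u hu
    simpa [hB] using hu
  let b : (d → ℤ) → ℂ := fun k => ∫ u, mFourier (-k) u ∂β
  have hb' : ∀ k, ∫ u, mFourier (-k) u ∂β' = conj (b k) := by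
    intro k
    rw [hβ', integral_map (by fun_prop) (by fun_prop)]
    rw [← integral_conj]
    congr 1
    ext u
    have := hl_mFourier_sub (-k) 0 u
    rw [zero_sub] at this
    rw [this]
    simp [mFourier]
  have hKK : IsCompact (K - K) := by
    rw [sub_eq_add_neg]; exact hK.add hK.neg
  let c : (d → ℤ) → ℝ := fun k => a k * ‖b k‖ ^ 2
  have hc0 : ∀ k, 0 ≤ c k := fun k => mul_nonneg (ha k) (by positivity)
  have hbs : Summable fun k => ‖b k‖ ^ 2 := by
    have := (hl_coeff_sq_summable hBm).mul_left (((volume B)⁻¹.toReal) ^ 2)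
    refine this.congr fun k => ?_
    simp only [b, hβ, ProbabilityTheory.cond, integral_smul_measure, norm_smul, mul_pow]
    simp
  have hab : ∀ k, a k ≤ ∫ t, ‖F t‖ := by
    intro k
    have h1 : ‖mFourierCoeff F k‖ ≤ ∫ t, ‖F t‖ := by
      refine (norm_integral_le_integral_norm _).trans_eq ?_
      congr 1
      ext t
      rw [norm_smul]
      have : ‖mFourier (-k) t‖ = 1 := by
        simp [mFourier, fourier_apply, norm_prod, Circle.norm_coe]
      rw [this, one_mul]
    rw [haF] at h1
    simpa [abs_of_nonneg (ha k)] using h1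
  have hcs : Summable c :=
    Summable.of_nonneg_of_le hc0
      (fun k => mul_le_mul_of_nonneg_right (hab k) (by positivity)) (hbs.mul_left _)
  obtain ⟨S, hS, hSc⟩ := hl_hasSum (fun k => (c k : ℂ)) (by exact_mod_cast hcs)
  have hF1 := hlAvg_integrable β hF
  have hF2 := hlAvg_integrable β' hF1
  have hae : hlAvg β' (hlAvg β F) =ᵐ[volume] S := by
    refine hl_unique' hF2
      (S.continuous.integrable_of_hasCompactSupport (HasCompactSupport.of_compactSpace _)) ?_
    intro k
    rw [hSc, hlAvg_coeff β' hF1, hlAvg_coeff β hF, hb', haF, mul_assoc]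
    change (a k : ℂ) * (b k * conj (b k)) = _
    rw [Complex.mul_conj']
    simp [c]
  have hV : MeasurableSet (Metric.thickening r (K - K)) := Metric.isOpen_thickening.measurableSet
  have e1 : ∫⁻ t in K - K, ‖S t‖ₑ ^ 2 ≤ ∫⁻ t in U, ‖F t‖ₑ ^ 2 := by
    calc ∫⁻ t in K - K, ‖S t‖ₑ ^ 2 = ∫⁻ t in K - K, ‖hlAvg β' (hlAvg β F) t‖ₑ ^ 2 := by
          refine lintegral_congr_ae (ae_restrict_of_ae ?_)
          filter_upwards [hae] with t ht
          rw [ht]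
      _ ≤ ∫⁻ t in Metric.thickening r (K - K), ‖hlAvg β F t‖ₑ ^ 2 := by
          refine hlAvg_sq β' hF1 hKK.measurableSet hV hβ'B fun t ht u hu => ?_
          rw [Metric.mem_thickening_iff]
          refine ⟨t, ht, ?_⟩
          simpa [hB, dist_eq_norm] using hu
      _ ≤ ∫⁻ t in U, ‖F t‖ₑ ^ 2 := by
          refine hlAvg_sq β hF hV hU hβB fun t ht u hu => hKU ?_
          rw [Metric.mem_thickening_iff] at ht ⊢
          obtain ⟨z, hz, hz'⟩ := ht
          refine ⟨z, hz, ?_⟩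
          have h1 : dist (t - u) t < r := by simpa [hB, dist_eq_norm] using hu
          linarith [dist_triangle (t - u) t z]
  refine le_trans ?_ e1
  have e2 := hl_summable c hc0 hS hK s
  have e3 : ∫⁻ t in K - K, ‖S t‖ₑ ^ 2 = ENNReal.ofReal (∫ t in K - K, ‖S t‖ ^ 2) := by
    rw [ofReal_integral_eq_lintegral_ofReal]
    · congr 1
      ext t
      rw [ENNReal.ofReal_pow (norm_nonneg _), ofReal_norm]
    · exact ContinuousOn.integrableOn_compact hKK (Continuous.continuousOn (by fun_prop))
    · exact Eventually.of_forall fun t => by positivity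
  rw [e3]
  refine le_trans ?_ (ENNReal.ofReal_le_ofReal e2)
  rw [ENNReal.ofReal_mul measureReal_nonneg, ofReal_measureReal]

theorem hl_torus {F : UnitAddTorus d → ℂ} (hF : Integrable F)
    (hF0 : ∀ k, 0 ≤ mFourierCoeff F k)
    {K U : Set (UnitAddTorus d)} (hK : IsCompact K) (hU : IsOpen U) (hKU : K - K ⊆ U) :
    volume K * ∫⁻ t, ‖F t‖ₑ ^ 2 ≤ ∫⁻ t in U, ‖F t‖ₑ ^ 2 := by
  let a : (d → ℤ) → ℝ := fun k => (mFourierCoeff F k).re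
  have ha : ∀ k, 0 ≤ a k := fun k => (Complex.nonneg_iff.1 (hF0 k)).1
  have haF : ∀ k, mFourierCoeff F k = a k := fun k => by
    apply Complex.ext
    · simp [a]
    · simp [(Complex.nonneg_iff.1 (hF0 k)).2.symm]
  have hKK : IsCompact (K - K) := by
    rw [sub_eq_add_neg]; exact hK.add hK.neg
  obtain ⟨δ, hδ, hδU⟩ := hKK.exists_thickening_subset_open hU hKU
  set X := ∫⁻ t in U, ‖F t‖ₑ ^ 2 with hX
  by_cases hXtop : X = ∞
  · rw [hXtop]; exact le_top
  by_cases hK0 : volume K = 0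
  · simp [hK0]
  -- finite sums
  have hfin : ∀ s : Finset (d → ℤ), volume K * ENNReal.ofReal (∑ k ∈ s, a k ^ 2) ≤ X := by
    intro s
    let r : ℕ → ℝ := fun m => δ / 2 * (1 / ((m : ℝ) + 1))
    have hr0 : ∀ m, 0 < r m := fun m => by positivity
    have hrδ : ∀ m, 2 * r m ≤ δ := fun m => by
      have : 1 / ((m : ℝ) + 1) ≤ 1 := by
        rw [div_le_one (by positivity)]
        linarith [(Nat.cast_nonneg m : (0 : ℝ) ≤ m)]
      simp only [r]
      nlinarith
    have hrlim : Tendsto r atTop (𝓝 0) := by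
      simpa [r] using tendsto_one_div_add_atTop_nhds_zero_nat.const_mul (δ / 2)
    let β : ℕ → Measure (UnitAddTorus d) := fun m =>
      ProbabilityTheory.cond volume (Metric.ball (0 : UnitAddTorus d) (r m))
    have : ∀ m, IsProbabilityMeasure (β m) := fun m =>
      ProbabilityTheory.cond_isProbabilityMeasure (Metric.measure_ball_pos volume 0 (hr0 m)).ne'
    have hb := hl_b_tendsto hrlim β
      (fun m => ProbabilityTheory.ae_cond_mem Metric.isOpen_ball.measurableSet)
    have hT : Tendsto (fun m => ∑ k ∈ s, (a k * ‖∫ u, mFourier (-k) u ∂(β m)‖ ^ 2) ^ 2) atTop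
        (𝓝 (∑ k ∈ s, a k ^ 2)) := by
      refine tendsto_finsetSum _ fun k _ => ?_
      have := (((hb k).norm.pow 2).const_mul (a k)).pow 2
      simpa using this
    have hT2 := ENNReal.Tendsto.const_mul (a := volume K) (ENNReal.tendsto_ofReal hT)
      (Or.inr (measure_ne_top _ _))
    refine le_of_tendsto hT2 (Eventually.of_forall fun m => ?_)
    exact hl_smooth hF a ha haF hK hU.measurableSet (hr0 m)
      ((Metric.thickening_mono (hrδ m) _).trans hδU) s
  have hKtop : volume K ≠ ∞ := measure_ne_top _ _
  have hfin2 : ∀ s : Finset (d → ℤ), ∑ k ∈ s, a k ^ 2 ≤ (X / volume K).toReal := by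
    intro s
    rw [← ENNReal.ofReal_le_iff_le_toReal (ENNReal.div_ne_top hXtop hK0),
      ENNReal.le_div_iff_mul_le (Or.inl hK0) (Or.inl hKtop), mul_comm]
    exact hfin s
  have hsum : Summable fun k => a k ^ 2 :=
    summable_of_sum_le (fun k => by positivity) hfin2
  have hmem : Memℓp (fun k => (a k : ℂ)) 2 := by
    refine memℓp_gen ?_
    simpa using hsum
  let H : Lp ℂ 2 (volume : Measure (UnitAddTorus d)) := mFourierBasis.repr.symm ⟨_, hmem⟩
  have hH : ∀ k, mFourierCoeff H k = a k := fun k => by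
    rw [← mFourierBasis_repr]
    simp [H]
  have hHF : F =ᵐ[volume] H := by
    refine hl_unique' hF ((Lp.memLp H).integrable (by norm_num)) fun k => ?_
    rw [hH, haF]
  have hpars := hasSum_sq_mFourierCoeff H
  simp only [hH] at hpars
  have hle : ∫ t, ‖H t‖ ^ 2 ≤ (X / volume K).toReal := by
    refine hasSum_le_of_sum_le hpars fun s => ?_
    simpa using hfin2 s
  have e : ∫⁻ t, ‖F t‖ₑ ^ 2 = ENNReal.ofReal (∫ t, ‖H t‖ ^ 2) := by
    rw [ofReal_integral_eq_lintegral_ofReal]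
    · refine lintegral_congr_ae ?_
      filter_upwards [hHF] with t ht
      rw [ENNReal.ofReal_pow (norm_nonneg _), ofReal_norm, ht]
    · exact (Lp.memLp H).integrable_norm_pow (by norm_num)
    · exact Eventually.of_forall fun t => by positivity
  rw [e, mul_comm]
  rw [← ENNReal.le_div_iff_mul_le (Or.inl hK0) (Or.inl hKtop)]
  exact ENNReal.ofReal_le_of_le_toReal hle

noncomputable def hlSec {n : ℕ} (t : UnitAddTorus (Fin n)) : Fin n → ℝ :=
  fun i => (AddCircle.equivIoc (1 : ℝ) (-(1/2 : ℝ)) (t i)).1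

def hlProj {n : ℕ} (x : Fin n → ℝ) : UnitAddTorus (Fin n) := fun i => (x i : UnitAddCircle)

def hlJ (n : ℕ) : Set (Fin n → ℝ) :=
  {x : Fin n → ℝ | ∀ i, x i ∈ Ioc (-(1/2 : ℝ)) (-(1/2 : ℝ) + 1)}

theorem hlJ_eq (n : ℕ) : hlJ n = Set.pi univ fun _ => Ioc (-(1/2 : ℝ)) (1/2 : ℝ) := by
  ext x
  simp only [hlJ, Set.mem_ofPred_eq, Set.mem_pi, mem_univ, true_imp_iff]
  norm_num

theorem hlJ_ae (n : ℕ) : hlJ n =ᵐ[volume] box n := by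
  rw [hlJ_eq, box]
  exact Measure.univ_pi_Ioc_ae_eq_Icc

theorem hlProj_sec {n : ℕ} (t : UnitAddTorus (Fin n)) : hlProj (hlSec t) = t := by
  ext i
  exact (AddCircle.equivIoc (1 : ℝ) (-(1/2 : ℝ))).symm_apply_apply (t i)

theorem hlProj_eq {n : ℕ} {x y : Fin n → ℝ} (h : hlProj x = hlProj y) :
    ∃ ν : Fin n → ℤ, x = y + fun i => (ν i : ℝ) := by
  have : ∀ i, ∃ m : ℤ, x i = y i + m := by
    intro i
    have h1 : ((x i - y i : ℝ) : UnitAddCircle) = 0 := by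
      rw [AddCircle.coe_sub, sub_eq_zero]
      exact congrFun h i
    obtain ⟨m, hm⟩ := (AddCircle.coe_eq_zero_iff (1 : ℝ)).1 h1
    refine ⟨m, ?_⟩
    simp at hm
    linarith
  choose ν hν using this
  exact ⟨ν, funext hν⟩

theorem hlSec_mp (n : ℕ) :
    MeasurePreserving (hlSec (n := n)) volume (volume.restrict (hlJ n)) := by
  have h1 := measurePreserving_equivPiIoc (fun _ : Fin n => (-(1/2 : ℝ)))
  have hJ : MeasurableSet (hlJ n) := by
    rw [hlJ_eq]; exact MeasurableSet.univ_pi fun _ => measurableSet_Ioc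
  have h2 : MeasurePreserving (Subtype.val : hlJ n → (Fin n → ℝ))
      (Measure.comap Subtype.val volume) (volume.restrict (hlJ n)) :=
    ⟨measurable_subtype_coe, map_comap_subtype_coe hJ volume⟩
  exact h2.comp h1

theorem hl_char {n : ℕ} (k : Fin n → ℤ) (x : Fin n → ℝ) :
    mFourier (-k) (hlProj x) = eC (-(∑ i, (k i : ℝ) * x i)) := by
  simp only [mFourier, hlProj, ContinuousMap.coe_mk, eC, Pi.neg_apply, fourier_coe_apply]
  rw [← Complex.exp_sum]
  congr 1
  push_cast
  rw [← Finset.sum_neg_distrib, Finset.mul_sum]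
  refine Finset.sum_congr rfl fun i _ => ?_
  simp
  ring

theorem hl_main (n : ℕ) (D : Set (Fin n → ℝ)) (hD : D ⊆ box n)
    (hconv : Convex ℝ D) (hsym : ∀ x ∈ D, -x ∈ D)
    (f : (Fin n → ℝ) → ℂ) (hper : IsPeriodic f) (hf : IntegrableOn f (box n))
    (hf0 : ∀ ν, 0 ≤ fourierCoeffT f ν) :
    volume ((2 : ℝ)⁻¹ • D) * ∫⁻ x in box n, (‖f x‖₊ : ℝ≥0∞) ^ 2 ≤
      ∫⁻ x in D, (‖f x‖₊ : ℝ≥0∞) ^ 2 := by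
  let F : UnitAddTorus (Fin n) → ℂ := fun t => f (hlSec t)
  have hFf : ∀ x, F (hlProj x) = f x := by
    intro x
    obtain ⟨ν, hν⟩ := hlProj_eq (hlProj_sec (hlProj x))
    change f (hlSec (hlProj x)) = f x
    rw [hν, hper]
  have hFi : Integrable F := by
    have h1 : Integrable f (volume.restrict (hlJ n)) := by
      rw [Measure.restrict_congr_set (hlJ_ae n)]; exact hf
    exact (hlSec_mp n).integrable_comp_of_integrable h1
  have hF0 : ∀ k, 0 ≤ mFourierCoeff F k := by
    intro k
    have : mFourierCoeff F k = fourierCoeffT f k := by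
      rw [mFourierCoeff_eq_integral F k (fun _ => (-(1/2 : ℝ)))]
      change ∫ x in hlJ n, mFourier (-k) (hlProj x) • F (hlProj x) = _
      rw [Measure.restrict_congr_set (hlJ_ae n), fourierCoeffT]
      congr 1
      ext x
      rw [hFf, hl_char, smul_eq_mul, mul_comm]
    rw [this]; exact hf0 k
  have hpc : Continuous (hlProj (n := n)) :=
    continuous_pi fun i => (AddCircle.continuous_mk' (1 : ℝ)).comp (continuous_apply i)
  have hpo : IsOpenMap (hlProj (n := n)) :=
    IsOpenMap.piMap (f := fun (_ : Fin n) (x : ℝ) => (x : UnitAddCircle))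
      (fun _ => QuotientAddGroup.isOpenMap_coe) (Eventually.of_forall fun _ => QuotientAddGroup.mk_surjective)
  set U := hlProj '' interior D with hU
  have hUo : IsOpen U := hpo _ isOpen_interior
  -- interior of the box
  have hbox : ∀ x ∈ interior D, ∀ i, x i ∈ Ioo (-(1/2 : ℝ)) (1/2) := by
    intro x hx i
    have h1 := interior_mono hD hx
    rw [box, ← pi_univ_Icc, interior_pi_set finite_univ] at h1
    have := h1 i (mem_univ i)
    rwa [interior_Icc] at this
  have hinj : ∀ x ∈ hlJ n, hlProj x ∈ U → x ∈ D := by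
    rintro x hx ⟨y, hy, hyx⟩
    obtain ⟨ν, hν⟩ := hlProj_eq hyx
    have : y = x := by
      rw [hν]
      ext i
      have h1 := hbox y hy i
      have h2 := hx i
      have h3 := congrFun hν i
      simp only [Pi.add_apply] at h3 ⊢
      obtain ⟨h1a, h1b⟩ := h1
      obtain ⟨h2a, h2b⟩ := h2
      have h4 : (ν i : ℝ) < 1 := by linarith
      have h5 : (-1 : ℝ) < ν i := by linarith
      have h6 : ν i < 1 := by exact_mod_cast h4
      have h7 : -1 < ν i := by exact_mod_cast h5
      have : ν i = 0 := by omega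
      simp [this]
    rw [← this]; exact interior_subset hy
  have hJm : MeasurableSet (hlJ n) := by
    rw [hlJ_eq]; exact MeasurableSet.univ_pi fun _ => measurableSet_Ioc
  have hl1 : ∫⁻ t, ‖F t‖ₑ ^ 2 = ∫⁻ x in box n, (‖f x‖₊ : ℝ≥0∞) ^ 2 := by
    rw [lintegral_preimage (fun t => ‖F t‖ₑ ^ 2) (fun _ => (-(1/2 : ℝ)))]
    change ∫⁻ x in hlJ n, ‖F (hlProj x)‖ₑ ^ 2 = _
    rw [Measure.restrict_congr_set (hlJ_ae n)]
    simp only [hFf]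
    rfl
  have hl2 : ∫⁻ t in U, ‖F t‖ₑ ^ 2 ≤ ∫⁻ x in D, (‖f x‖₊ : ℝ≥0∞) ^ 2 := by
    rw [← lintegral_indicator hUo.measurableSet,
      lintegral_preimage (U.indicator fun t => ‖F t‖ₑ ^ 2) (fun _ => (-(1/2 : ℝ)))]
    change ∫⁻ x in hlJ n, U.indicator (fun t => ‖F t‖ₑ ^ 2) (hlProj x) ≤ _
    rw [← lintegral_indicator hJm]
    refine le_trans (lintegral_mono fun x => ?_)
      (lintegral_indicator_le (fun x => (‖f x‖₊ : ℝ≥0∞) ^ 2) D)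
    by_cases hx : x ∈ hlJ n
    · by_cases hxU : hlProj x ∈ U
      · simp only [indicator_of_mem hx, indicator_of_mem hxU, indicator_of_mem (hinj x hx hxU), hFf]
        exact le_rfl
      · simp [hx, hxU]
    · simp [hx]
  have hvol : ∀ K : Set (Fin n → ℝ), IsCompact K → K ⊆ hlJ n →
      volume K ≤ volume (hlProj '' K) := by
    intro K hK hKJ
    have hm : MeasurableSet (hlProj '' K) := (hK.image hpc).measurableSet
    rw [← lintegral_indicator_one hm,
      lintegral_preimage ((hlProj '' K).indicator 1) (fun _ => (-(1/2 : ℝ)))]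
    change _ ≤ ∫⁻ x in hlJ n, (hlProj '' K).indicator 1 (hlProj x)
    rw [← lintegral_indicator hJm, ← lintegral_indicator_one hK.measurableSet]
    refine lintegral_mono fun x => ?_
    by_cases hx : x ∈ K
    · simp [hx, hKJ hx, mem_image_of_mem hlProj hx]
    · simp [hx]
  -- interior of D/2
  set C := (2 : ℝ)⁻¹ • D with hC
  have hCconv : Convex ℝ C := hconv.smul _
  have hCint : interior C = (2 : ℝ)⁻¹ • interior D := interior_smul₀ (by norm_num) D
  have hCvol : volume C = volume (interior C) :=
    (measure_congr (interior_ae_eq_of_null_frontier (hCconv.addHaar_frontier volume))).symm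
  have hsub : interior C - interior C ⊆ interior D := by
    refine interior_maximal ?_ (isOpen_interior.sub_right)
    rintro _ ⟨x, hx, y, hy, rfl⟩
    rw [hCint] at hx hy
    obtain ⟨x, hx, rfl⟩ := hx
    obtain ⟨y, hy, rfl⟩ := hy
    have := hconv (interior_subset hx) (hsym y (interior_subset hy))
      (a := (2 : ℝ)⁻¹) (b := (2 : ℝ)⁻¹) (by norm_num) (by norm_num) (by norm_num)
    simpa [sub_eq_add_neg] using this
  have hCJ : interior C ⊆ hlJ n := by
    intro x hx i
    rw [hCint] at hx
    obtain ⟨y, hy, rfl⟩ := hx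
    have := hbox y hy i
    obtain ⟨h1, h2⟩ := this
    simp only [Pi.smul_apply, smul_eq_mul]
    constructor <;> linarith
  rw [hCvol, isOpen_interior.measure_eq_iSup_isCompact]
  simp only [ENNReal.iSup_mul]
  refine iSup_le fun K => iSup_le fun hKC => iSup_le fun hK => ?_
  have := hl_torus hFi hF0 (hK.image hpc) hUo (by
    rintro _ ⟨_, ⟨x, hx, rfl⟩, _, ⟨y, hy, rfl⟩, rfl⟩
    refine ⟨x - y, hsub ⟨x, hKC hx, y, hKC hy, rfl⟩, ?_⟩
    ext i
    simp [hlProj])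
  rw [hl1] at this
  exact (mul_le_mul_left (hvol K hK (hKC.trans hCJ)) _).trans (this.trans hl2)

theorem hl_one_coeff (n : ℕ) (ν : Fin n → ℤ) : 0 ≤ fourierCoeffT (n := n) (fun _ => 1) ν := by
  classical
  have h0 : mFourierCoeff (fun _ : UnitAddTorus (Fin n) => (1 : ℂ)) ν =
      fourierCoeffT (fun _ => 1) ν := by
    rw [mFourierCoeff_eq_integral _ ν (fun _ => (-(1/2 : ℝ)))]
    change ∫ x in hlJ n, mFourier (-ν) (hlProj x) • (1 : ℂ) = _
    rw [Measure.restrict_congr_set (hlJ_ae n), fourierCoeffT]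
    congr 1
    ext x
    rw [hl_char, smul_eq_mul, mul_comm]
  let c : (Fin n → ℤ) → ℂ := fun k => if k = 0 then 1 else 0
  obtain ⟨S, hS, hSc⟩ := hl_hasSum c (hasSum_ite_eq 0 1).summable
  have hS1 : HasSum (fun k => c k • mFourier k) (1 : C(UnitAddTorus (Fin n), ℂ)) := by
    have := hasSum_single (f := fun k => c k • mFourier (d := Fin n) k) 0
      (fun k hk => by simp only [c, if_neg hk]; exact zero_smul ℂ (mFourier (d := Fin n) k))
    simpa [c, mFourier_zero] using this
  have hS' := hS.unique hS1
  have h1 : mFourierCoeff (fun _ : UnitAddTorus (Fin n) => (1 : ℂ)) ν = c ν := by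
    rw [← hSc ν, hS']
    rfl
  rw [← h0, h1]
  simp only [c]
  split_ifs
  · exact zero_le_one
  · exact le_rfl

end Torus

theorem hlawka_inequality (n : ℕ) (D : Set (Fin n → ℝ)) (hD : D ⊆ box n)
    (hconv : Convex ℝ D) (hsym : ∀ x ∈ D, -x ∈ D) (hcomp : IsCompact D)
    (hint : (interior D).Nonempty) :
    (∀ f : (Fin n → ℝ) → ℂ, IsPeriodic f → IntegrableOn f (box n) →
      (∀ ν, 0 ≤ fourierCoeffT f ν) →
      ∫⁻ x in box n, (‖f x‖₊ : ℝ≥0∞) ^ 2 ≤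
        (volume ((2 : ℝ)⁻¹ • D))⁻¹ * ∫⁻ x in D, (‖f x‖₊ : ℝ≥0∞) ^ 2) ∧
    Wconst n D ≤ 2 ^ n := by
  have hDpos : volume D ≠ 0 := (Measure.measure_pos_of_nonempty_interior volume hint).ne'
  have hDtop : volume D ≠ ∞ := hcomp.measure_lt_top.ne
  have hv : volume ((2 : ℝ)⁻¹ • D) = ENNReal.ofReal ((2 : ℝ)⁻¹ ^ n) * volume D := by
    rw [Measure.addHaar_smul]
    simp
  have h2 : ENNReal.ofReal ((2 : ℝ)⁻¹ ^ n) ≠ 0 := by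
    rw [Ne, ENNReal.ofReal_eq_zero, not_le]; positivity
  have hinv : (volume ((2 : ℝ)⁻¹ • D))⁻¹ = ENNReal.ofReal (2 ^ n) * (volume D)⁻¹ := by
    rw [hv, ENNReal.mul_inv (Or.inl h2) (Or.inl ENNReal.ofReal_ne_top),
      ← ENNReal.ofReal_inv_of_pos (by positivity)]
    simp
  have main : ∀ f : (Fin n → ℝ) → ℂ, IsPeriodic f → IntegrableOn f (box n) →
      (∀ ν, 0 ≤ fourierCoeffT f ν) →
      ∫⁻ x in box n, (‖f x‖₊ : ℝ≥0∞) ^ 2 ≤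
        (volume ((2 : ℝ)⁻¹ • D))⁻¹ * ∫⁻ x in D, (‖f x‖₊ : ℝ≥0∞) ^ 2 := by
    intro f hper hf hf0
    have := hl_main n D hD hconv hsym f hper hf hf0
    have hv0 : volume ((2 : ℝ)⁻¹ • D) ≠ 0 := by
      rw [hv]; exact mul_ne_zero h2 hDpos
    have hvt : volume ((2 : ℝ)⁻¹ • D) ≠ ∞ := by
      rw [hv]; exact ENNReal.mul_ne_top ENNReal.ofReal_ne_top hDtop
    rw [mul_comm _ (∫⁻ x in D, (‖f x‖₊ : ℝ≥0∞) ^ 2), ← div_eq_mul_inv,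
      ENNReal.le_div_iff_mul_le (Or.inl hv0) (Or.inl hvt), mul_comm]
    exact this
  refine ⟨main, ?_⟩
  refine csInf_le ⟨0, ?_⟩ ?_
  · intro C hC
    by_contra hneg
    push Not at hneg
    have hvb : (volume : Measure (Fin n → ℝ)) (box n) = 1 := by
      rw [box, Real.volume_Icc_pi]
      norm_num
    have h := hC (fun _ => 1) (fun _ _ => rfl) (by
      refine integrableOn_const ?_
      rw [hvb]; exact ENNReal.one_ne_top) (by
      exact hl_one_coeff n)
    rw [ENNReal.ofReal_of_nonpos hneg.le] at h
    simp [hvb] at h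
  · intro f hper hf hf0
    rw [← hinv]
    exact main f hper hf hf0
end
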